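/- (Almkvist) For every natural number n ≥ 83 and every k with (n−1)² ≤ 2k ≤ n², one has (as real numbers) b_k(n) − b_{k−1}(n) ≥ C · 2^n / n^{9/2}, where C = 3√3/(√2·π²). -/

import Mathlib

/-- `distinctOddPartitions k n` is the number of partitions of `k` into distinct odd
parts, each part at most `2n - 1`. -/
noncomputable def distinctOddPartitions (k n : ℕ) : ℕ :=
  Nat.card {π : Nat.Partition k // π.parts.Nodup ∧ ∀ i ∈ π.parts, Odd i ∧ i ≤ 2 * n - 1}

/-!
The generating function of `k ↦ distinctOddPartitions k n` is `∏ j < n, (1 + q ^ (2j + 1))`. On the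
unit circle, at `q = exp (2it)`, it is `2 ^ n * ∏ j < n, cos ((2j + 1) t)` times a phase, and
Fourier inversion gives
`b_k(n) - b_{k-1}(n) = 4 / π * 2 ^ n * ∫ t in 0..π / 2, (∏ cos ((2j + 1) t)) * sin (m t) * sin t`
with `m = n ^ 2 - 2k + 1`. The hypotheses on `k` say exactly that `1 ≤ m ≤ 2n`.

Near `0` the cosine product is at least `(1 - n ^ 3 t ^ 2 / 4) ^ 3` and both sines are at least
`0.99 t`, so the peak `t ≤ 2 / n ^ (3 / 2)` contributes a multiple of `n ^ (-9 / 2)`. The integrand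
stays nonnegative up to `t = π / (4n)`. Beyond that point the AM-GM inequality, applied to the
closed form of `∑ cos ((2j + 1) t) ^ 2`, bounds the product by `(5 / 8) ^ (n / 2)`, which is
exponentially small.
-/

open Finset Real

section SubsetSums

/-- The number of subsets of `A` with sum `k`, that is, the coefficient of `q ^ k` in
`∏ a ∈ A, (1 + q ^ a)`. -/
def subsetSumCount (A : Finset ℕ) (k : ℕ) : ℕ := #{S ∈ A.powerset | ∑ a ∈ S, a = k}

lemma card_partition_nodup_mem_eq_subsetSumCount {A : Finset ℕ} (hA : 0 ∉ A) (k : ℕ) :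
    Nat.card {p : Nat.Partition k // p.parts.Nodup ∧ ∀ i ∈ p.parts, i ∈ A} =
      subsetSumCount A k := by
  have e : {p : Nat.Partition k // p.parts.Nodup ∧ ∀ i ∈ p.parts, i ∈ A} ≃
      {S // S ∈ A.powerset.filter (∑ a ∈ ·, a = k)} :=
    { toFun p := ⟨⟨p.1.parts, p.2.1⟩, mem_filter.2
        ⟨mem_powerset.2 p.2.2, (sum_val _).symm.trans p.1.parts_sum⟩⟩
      invFun S := ⟨⟨S.1.val,
          fun hi ↦ Nat.pos_of_ne_zero <|
            ne_of_mem_of_not_mem (mem_powerset.1 (mem_filter.1 S.2).1 hi) hA,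
          (sum_val _).trans (mem_filter.1 S.2).2⟩,
        S.1.nodup, mem_powerset.1 (mem_filter.1 S.2).1⟩
      left_inv _ := rfl
      right_inv _ := rfl }
  rw [Nat.card_congr e, Nat.card_eq_fintype_card, Fintype.card_coe, subsetSumCount]

lemma sum_powerset_cos {ι : Type*} (s : Finset ι) (f : ι → ℝ) (c : ℝ) :
    ∑ S ∈ s.powerset, cos (c + (∑ i ∈ s, f i - 2 * ∑ i ∈ S, f i)) =
      2 ^ #s * (∏ i ∈ s, cos (f i)) * cos c := by
  classical
  induction s using Finset.induction_on generalizing c with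
  | empty => simp
  | insert a s ha ih =>
    have sum_without : ∑ S ∈ s.powerset,
        cos (c + (∑ i ∈ insert a s, f i - 2 * ∑ i ∈ S, f i)) =
          2 ^ #s * (∏ i ∈ s, cos (f i)) * cos (c + f a) := by
      rw [← ih, sum_insert ha]
      refine sum_congr rfl fun S _ ↦ ?_
      ring_nf
    have sum_with : ∑ S ∈ s.powerset,
        cos (c + (∑ i ∈ insert a s, f i - 2 * ∑ i ∈ insert a S, f i)) =
          2 ^ #s * (∏ i ∈ s, cos (f i)) * cos (c - f a) := by
      rw [← ih, sum_insert ha]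
      refine sum_congr rfl fun S hS ↦ ?_
      rw [sum_insert fun h ↦ ha (mem_powerset.1 hS h)]
      ring_nf
    rw [sum_powerset_insert ha, sum_without, sum_with, prod_insert ha, card_insert_of_notMem ha,
      cos_add, cos_sub]
    ring

lemma integral_cos_two_mul_int_mul (m : ℤ) :
    ∫ t in (0 : ℝ)..π / 2, cos (2 * m * t) = if m = 0 then π / 2 else 0 := by
  split_ifs with hm
  · simp [hm]
  · have hm' : (2 * m : ℝ) ≠ 0 := by simpa using hm
    have h_end : 2 * (m : ℝ) * (π / 2) = m * π := by ring
    rw [intervalIntegral.integral_comp_mul_left cos hm', integral_cos, h_end, sin_int_mul_pi]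
    simp

lemma pi_div_two_mul_subsetSumCount (A : Finset ℕ) (k : ℕ) :
    π / 2 * subsetSumCount A k = 2 ^ #A *
      ∫ t in (0 : ℝ)..π / 2, (∏ a ∈ A, cos (a * t)) * cos ((∑ a ∈ A, (a : ℝ) - 2 * k) * t) := by
  have expand (t : ℝ) :
      2 ^ #A * ((∏ a ∈ A, cos (a * t)) * cos ((∑ a ∈ A, (a : ℝ) - 2 * k) * t)) =
        ∑ S ∈ A.powerset, cos (2 * ((k : ℤ) - (∑ a ∈ S, a : ℕ) : ℤ) * t) := by
    rw [← cos_neg (_ * t), ← mul_assoc, ← sum_powerset_cos]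
    refine sum_congr rfl fun S _ ↦ ?_
    rw [← sum_mul, ← sum_mul]
    push_cast
    ring_nf
  have sum_eq_iff (S : Finset ℕ) : (k : ℤ) - (∑ a ∈ S, a : ℕ) = 0 ↔ ∑ a ∈ S, a = k := by omega
  rw [← intervalIntegral.integral_const_mul]
  simp_rw [expand]
  rw [intervalIntegral.integral_finsetSum fun S _ ↦
    Continuous.intervalIntegrable (by fun_prop) _ _]
  simp_rw [integral_cos_two_mul_int_mul, sum_eq_iff]
  rw [← sum_filter, sum_const, nsmul_eq_mul, mul_comm, subsetSumCount]

lemma subsetSumCount_succ_sub (A : Finset ℕ) (k : ℕ) :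
    (subsetSumCount A (k + 1) : ℝ) - subsetSumCount A k = 4 / π * 2 ^ #A *
      ∫ t in (0 : ℝ)..π / 2,
        (∏ a ∈ A, cos (a * t)) * (sin ((∑ a ∈ A, (a : ℝ) - 2 * k - 1) * t) * sin t) := by
  have cos_sub_cos_eq (σ t : ℝ) : cos ((σ - 2 * (k + 1 : ℕ)) * t) - cos ((σ - 2 * k) * t) =
      2 * (sin ((σ - 2 * k - 1) * t) * sin t) := by
    rw [cos_sub_cos, ← neg_neg (sin t), ← sin_neg]
    push_cast
    ring_nf
  have key : π / 2 * ((subsetSumCount A (k + 1) : ℝ) - subsetSumCount A k) =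
      2 ^ #A * (2 * ∫ t in (0 : ℝ)..π / 2,
        (∏ a ∈ A, cos (a * t)) * (sin ((∑ a ∈ A, (a : ℝ) - 2 * k - 1) * t) * sin t)) := by
    rw [mul_sub, pi_div_two_mul_subsetSumCount, pi_div_two_mul_subsetSumCount, ← mul_sub,
      ← intervalIntegral.integral_sub (Continuous.intervalIntegrable (by fun_prop) _ _)
        (Continuous.intervalIntegrable (by fun_prop) _ _),
      ← intervalIntegral.integral_const_mul 2]
    simp_rw [← mul_sub, cos_sub_cos_eq, mul_left_comm]
  calc (subsetSumCount A (k + 1) : ℝ) - subsetSumCount A k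
      = 2 / π * (π / 2 * ((subsetSumCount A (k + 1) : ℝ) - subsetSumCount A k)) := by field_simp
    _ = _ := by rw [key]; ring

end SubsetSums

section OddNumbers

/-- The set `{1, 3, …, 2n - 1}` of the first `n` odd numbers. -/
def firstOdds (n : ℕ) : Finset ℕ := (range n).image (2 * · + 1)

/-- The product `∏ cos ((2j + 1) t)` over the first `n` odd numbers; times `2 ^ n`, it is the
generating function `∏ (1 + q ^ (2j + 1))` at `q = exp (2it)`, rotated to be real. -/
noncomputable def oddCosProd (n : ℕ) (t : ℝ) : ℝ := ∏ j ∈ range n, cos ((2 * j + 1) * t)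

lemma mem_firstOdds {n i : ℕ} : i ∈ firstOdds n ↔ Odd i ∧ i ≤ 2 * n - 1 := by
  simp only [firstOdds, mem_image, mem_range]
  constructor
  · rintro ⟨j, hj, rfl⟩
    exact ⟨odd_two_mul_add_one j, by omega⟩
  · rintro ⟨⟨j, rfl⟩, hj⟩
    exact ⟨j, by omega, rfl⟩

lemma two_mul_add_one_injective : Function.Injective (fun j : ℕ ↦ 2 * j + 1) :=
  fun i j h ↦ by simpa using h

lemma card_firstOdds (n : ℕ) : #(firstOdds n) = n := by
  rw [firstOdds, card_image_of_injective _ two_mul_add_one_injective, card_range]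

lemma sum_firstOdds (n : ℕ) : ∑ a ∈ firstOdds n, (a : ℝ) = n ^ 2 := by
  rw [firstOdds, sum_image two_mul_add_one_injective.injOn]
  induction n with
  | zero => simp
  | succ n ih => rw [sum_range_succ, ih]; push_cast; ring

lemma prod_firstOdds_cos (n : ℕ) (t : ℝ) :
    ∏ a ∈ firstOdds n, cos (a * t) = oddCosProd n t := by
  rw [firstOdds, prod_image two_mul_add_one_injective.injOn, oddCosProd]
  push_cast
  rfl

lemma distinctOddPartitions_eq_subsetSumCount (k n : ℕ) :
    distinctOddPartitions k n = subsetSumCount (firstOdds n) k := by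
  have zero_notMem : 0 ∉ firstOdds n := by simp [mem_firstOdds]
  simp only [distinctOddPartitions, ← mem_firstOdds,
    card_partition_nodup_mem_eq_subsetSumCount zero_notMem]

lemma distinctOddPartitions_succ_sub (k n : ℕ) :
    (distinctOddPartitions (k + 1) n : ℝ) - distinctOddPartitions k n = 4 / π * 2 ^ n *
      ∫ t in (0 : ℝ)..π / 2, oddCosProd n t * (sin (((n : ℝ) ^ 2 - 2 * k - 1) * t) * sin t) := by
  simp_rw [distinctOddPartitions_eq_subsetSumCount, subsetSumCount_succ_sub, card_firstOdds,
    sum_firstOdds, prod_firstOdds_cos]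

end OddNumbers

section ElementaryInequalities

lemma prod_le_pow_card_of_sum_le {ι : Type*} {s : Finset ι} {f : ι → ℝ} {M : ℝ}
    (hf : ∀ i ∈ s, 0 ≤ f i) (h : ∑ i ∈ s, f i ≤ #s * M) : ∏ i ∈ s, f i ≤ M ^ #s := by
  rcases s.eq_empty_or_nonempty with rfl | hs
  · simp
  have card_pos : (0 : ℝ) < #s := by exact_mod_cast hs.card_pos
  have am_gm : (∏ i ∈ s, f i) ^ (#s : ℝ)⁻¹ ≤ (∑ i ∈ s, f i) / #s := by
    simpa using geom_mean_le_arith_mean s (fun _ ↦ 1) f (fun _ _ ↦ zero_le_one) (by simpa) hf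
  have mean_le : (∑ i ∈ s, f i) / #s ≤ M := (div_le_iff₀' card_pos).2 h
  rw [← rpow_inv_natCast_pow (prod_nonneg hf) hs.card_ne_zero]
  exact pow_le_pow_left₀ (rpow_nonneg (prod_nonneg hf) _) (am_gm.trans mean_le) _

lemma one_sub_sum_le_prod_one_sub {ι : Type*} {s : Finset ι} {f : ι → ℝ}
    (h0 : ∀ i ∈ s, 0 ≤ f i) (h1 : ∀ i ∈ s, f i ≤ 1) :
    1 - ∑ i ∈ s, f i ≤ ∏ i ∈ s, (1 - f i) := by
  classical
  induction s using Finset.induction_on with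
  | empty => simp
  | insert a s ha ih =>
    rw [forall_mem_insert] at h0 h1
    rw [sum_insert ha, prod_insert ha]
    have sum_nonneg : 0 ≤ ∑ i ∈ s, f i := sum_nonneg h0.2
    calc 1 - (f a + ∑ i ∈ s, f i) ≤ (1 - f a) * (1 - ∑ i ∈ s, f i) := by
          nlinarith [mul_nonneg h0.1 sum_nonneg]
      _ ≤ (1 - f a) * ∏ i ∈ s, (1 - f i) :=
          mul_le_mul_of_nonneg_left (ih h0.2 h1.2) (sub_nonneg.2 h1.1)

lemma mul_le_sin_of_sq_le {c x : ℝ} (hx : 0 ≤ x) (h : x ^ 2 ≤ 6 * (1 - c)) : c * x ≤ sin x := by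
  rcases hx.eq_or_lt with rfl | hx
  · simp
  calc c * x ≤ (1 - x ^ 2 / 6) * x := by gcongr; linarith
    _ = x - x ^ 3 / 6 := by ring
    _ ≤ sin x := (sin_gt_sub_cube hx).le

lemma sin_le_sin_of_le_of_le_pi_sub {a x : ℝ} (ha : -(π / 2) ≤ a) (hax : a ≤ x)
    (hxa : x ≤ π - a) : sin a ≤ sin x := by
  rcases le_total x (π / 2) with hx | hx
  · exact sin_le_sin_of_le_of_le_pi_div_two ha hx hax
  · rw [← sin_pi_sub x]
    exact sin_le_sin_of_le_of_le_pi_div_two ha (by linarith) (by linarith)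

lemma sin_le_sin_mul {m x : ℝ} (hm : 1 ≤ m) (hx : 0 ≤ x) (hmx : m * x ≤ π / 2) :
    sin x ≤ sin (m * x) :=
  sin_le_sin_of_le_of_le_pi_div_two (by linarith [pi_pos]) hmx (le_mul_of_one_le_left hx hm)

lemma abs_sin_le_mul_of_pi_le {x : ℝ} (hx : π ≤ x) : |sin x| ≤ 0.2495 * x := by
  rcases le_total x 4.1 with h | h
  · calc |sin x| = |sin (x - π)| := by rw [sin_sub_pi, abs_neg]
      _ ≤ |x - π| := abs_sin_le_abs
      _ = x - π := abs_of_nonneg (sub_nonneg.2 hx)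
      _ ≤ 0.2495 * x := by linarith [pi_gt_d2]
  · linarith [abs_sin_le_one x]

lemma one_sub_three_div_sixteen_sq_pow_three_le_cos {x : ℝ} (hx : x ^ 2 ≤ 16 / 27) :
    (1 - 3 / 16 * x ^ 2) ^ 3 ≤ cos x := by
  refine le_trans ?_ one_sub_sq_div_two_le_cos
  nlinarith [mul_nonneg (sq_nonneg x) (sub_nonneg.2 hx), pow_nonneg (sq_nonneg x) 3]

lemma neg_mul_le_integral_of_abs_le {f : ℝ → ℝ} {a b C : ℝ} (hab : a ≤ b)
    (hf : ∀ x ∈ Set.Icc a b, |f x| ≤ C) : -(C * (b - a)) ≤ ∫ x in a..b, f x := by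
  have norm_le := intervalIntegral.norm_integral_le_of_norm_le_const (f := f) (a := a) (b := b)
    fun x hx ↦ hf x (Set.Ioc_subset_Icc_self (Set.uIoc_of_le hab ▸ hx))
  rw [abs_of_nonneg (sub_nonneg.2 hab)] at norm_le
  exact (abs_le.1 norm_le).1

lemma integral_sq_mul_one_sub_div_pow_three (b : ℝ) :
    ∫ t in (0 : ℝ)..b, t ^ 2 * (1 - t ^ 2 / b ^ 2) ^ 3 = 16 / 315 * b ^ 3 := by
  rcases eq_or_ne b 0 with rfl | hb
  · simp
  have expand (t : ℝ) : t ^ 2 * (1 - t ^ 2 / b ^ 2) ^ 3 =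
      t ^ 2 - 3 / b ^ 2 * t ^ 4 + 3 / b ^ 4 * t ^ 6 - 1 / b ^ 6 * t ^ 8 := by
    ring
  simp_rw [expand]
  rw [intervalIntegral.integral_sub, intervalIntegral.integral_add, intervalIntegral.integral_sub]
  · simp only [intervalIntegral.integral_const_mul, integral_pow]
    field_simp
    ring
  all_goals exact Continuous.intervalIntegrable (by fun_prop) _ _

end ElementaryInequalities

section OddCosProdBounds

variable {n : ℕ} {t : ℝ}

lemma four_mul_sin_mul_sum_cos_sq (n : ℕ) (t : ℝ) :
    4 * sin (2 * t) * ∑ j ∈ range n, cos ((2 * j + 1) * t) ^ 2 =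
      2 * n * sin (2 * t) + sin (4 * n * t) := by
  induction n with
  | zero => simp
  | succ n ih =>
    have arg_succ : 4 * ((n + 1 : ℕ) : ℝ) * t = 2 * ((2 * n + 1) * t) + 2 * t := by
      push_cast; ring
    have arg : 4 * (n : ℝ) * t = 2 * ((2 * n + 1) * t) - 2 * t := by ring
    rw [sum_range_succ, mul_add, ih, cos_sq, arg_succ, arg, sin_add, sin_sub]
    push_cast
    ring

lemma sum_range_odd_sq (n : ℕ) :
    ∑ j ∈ range n, (2 * (j : ℝ) + 1) ^ 2 = (n : ℝ) * (4 * n ^ 2 - 1) / 3 := by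
  induction n with
  | zero => simp
  | succ n ih => rw [sum_range_succ, ih]; push_cast; ring

lemma abs_oddCosProd_le {d : ℝ} (hs : 0 < sin (2 * t))
    (h : sin (4 * n * t) ≤ d * (4 * n * sin (2 * t))) :
    |oddCosProd n t| ≤ √((1 / 2 + d) ^ n) := by
  have sum_le : ∑ j ∈ range n, cos ((2 * j + 1) * t) ^ 2 ≤ n * (1 / 2 + d) := by
    refine le_of_mul_le_mul_left ?_ (mul_pos four_pos hs)
    rw [four_mul_sin_mul_sum_cos_sq]
    linarith
  apply abs_le_sqrt
  rw [oddCosProd, ← prod_pow]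
  refine (prod_le_pow_card_of_sum_le (fun _ _ ↦ sq_nonneg _) ?_).trans_eq (by rw [card_range])
  rwa [card_range]

lemma abs_sin_four_mul_le (hnt : π ≤ 4 * n * t) (ht0 : 0 ≤ t) (ht : t ≤ 1 / 25) :
    |sin (4 * n * t)| ≤ 1 / 8 * (4 * n * sin (2 * t)) := by
  have le_sin : 0.998 * (2 * t) ≤ sin (2 * t) :=
    mul_le_sin_of_sq_le (by positivity) (by nlinarith)
  calc |sin (4 * n * t)| ≤ 0.2495 * (4 * n * t) := abs_sin_le_mul_of_pi_le hnt
    _ = 1 / 8 * (4 * n * (0.998 * (2 * t))) := by ring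
    _ ≤ 1 / 8 * (4 * n * sin (2 * t)) := by gcongr

lemma abs_oddCosProd_le_of_le (hnt : π ≤ 4 * n * t) (ht0 : 0 < t) (ht : t ≤ 1 / 25) :
    |oddCosProd n t| ≤ √((5 / 8) ^ n) := by
  have sin_pos : 0 < sin (2 * t) :=
    sin_pos_of_pos_of_lt_pi (by positivity) (by linarith [pi_gt_three])
  convert abs_oddCosProd_le sin_pos
    ((le_abs_self _).trans (abs_sin_four_mul_le hnt ht0.le ht)) using 3
  norm_num

lemma oddCosProd_pi_div_two (hn : n ≠ 0) : oddCosProd n (π / 2) = 0 :=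
  prod_eq_zero (mem_range.2 hn.bot_lt) (by simp)

lemma abs_oddCosProd_pi_div_two_sub_le (hn : n ≠ 0) (ht0 : 0 ≤ t) (ht : t ≤ 1 / 25) :
    |oddCosProd n (π / 2 - t)| ≤ √((5 / 8) ^ n) := by
  rcases ht0.eq_or_lt with rfl | ht0
  · simp [oddCosProd_pi_div_two hn]
  have sin_two_mul_sub : sin (2 * (π / 2 - t)) = sin (2 * t) := by
    rw [mul_sub, mul_div_cancel₀ π two_ne_zero, sin_pi_sub]
  have sin_four_mul_sub : sin (4 * n * (π / 2 - t)) = -sin (4 * n * t) := by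
    rw [← sin_nat_mul_two_pi_sub _ n]
    ring_nf
  have sin_pos : 0 < sin (2 * t) :=
    sin_pos_of_pos_of_lt_pi (by positivity) (by linarith [pi_gt_three])
  have neg_sin_le : -sin (4 * n * t) ≤ 1 / 8 * (4 * n * sin (2 * t)) := by
    rcases le_total π (4 * n * t) with hnt | hnt
    · exact (neg_le_abs _).trans (abs_sin_four_mul_le hnt ht0.le ht)
    · calc -sin (4 * n * t) ≤ 0 :=
            neg_nonpos.2 (sin_nonneg_of_nonneg_of_le_pi (by positivity) hnt)
        _ ≤ 1 / 8 * (4 * n * sin (2 * t)) := by positivity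
  convert abs_oddCosProd_le (n := n) (t := π / 2 - t) (d := 1 / 8)
    (by rwa [sin_two_mul_sub]) (by rwa [sin_two_mul_sub, sin_four_mul_sub]) using 3
  norm_num

lemma abs_oddCosProd_le_of_le_of_le (hn : 83 ≤ n) (ht : 1 / 25 ≤ t) (ht' : t ≤ π / 2 - 1 / 25) :
    |oddCosProd n t| ≤ √((27 / 50) ^ n) := by
  have le_sin : 0.998 * (2 / 25) ≤ sin (2 * t) :=
    (mul_le_sin_of_sq_le (by norm_num) (by norm_num)).trans <|
      sin_le_sin_of_le_of_le_pi_sub (by linarith [pi_pos]) (by linarith) (by linarith)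
  have le_mul_sin : 83 * (0.998 * (2 / 25)) ≤ n * sin (2 * t) := by
    gcongr
    exact_mod_cast hn
  convert abs_oddCosProd_le (n := n) (t := t) (d := 1 / 25) (by linarith)
    (by linarith [sin_le_one (4 * n * t)]) using 3
  norm_num

lemma two_mul_add_one_mul_le {j : ℕ} (hj : j ∈ range n) (ht : 0 ≤ t) :
    (2 * j + 1) * t ≤ 2 * n * t := by
  have hj' : (j : ℝ) + 1 ≤ n := by exact_mod_cast mem_range.1 hj
  gcongr
  linarith

lemma oddCosProd_nonneg (ht0 : 0 ≤ t) (ht : 2 * n * t ≤ π / 2) : 0 ≤ oddCosProd n t := by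
  refine prod_nonneg fun j hj ↦ cos_nonneg_of_neg_pi_div_two_le_of_le ?_
    ((two_mul_add_one_mul_le hj ht0).trans ht)
  calc -(π / 2) ≤ 0 := by linarith [pi_pos]
    _ ≤ (2 * j + 1) * t := by positivity

-- Comparing with a cube rather than with `1 - x ^ 2 / 2` keeps more of the Gaussian mass of the
-- product: the integral of `t ^ 2 * (1 - n ^ 3 * t ^ 2 / 4) ^ 3` is large enough, while that of
-- `t ^ 2 * (1 - 2 * n ^ 3 * t ^ 2 / 3)` is not.
lemma one_sub_pow_three_le_oddCosProd (hn : 27 ≤ n) (ht0 : 0 ≤ t) (ht : t ^ 2 * n ^ 3 ≤ 4) :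
    (1 - t ^ 2 * n ^ 3 / 4) ^ 3 ≤ oddCosProd n t := by
  have hn' : (27 : ℝ) ≤ n := by exact_mod_cast hn
  have arg_sq_le : ∀ j ∈ range n, ((2 * (j : ℝ) + 1) * t) ^ 2 ≤ 16 / 27 := fun j hj ↦ by
    calc ((2 * (j : ℝ) + 1) * t) ^ 2 ≤ (2 * n * t) ^ 2 := by
          gcongr ?_ ^ 2
          exact two_mul_add_one_mul_le hj ht0
      _ = 4 * (t ^ 2 * n ^ 3) / n := by field_simp; ring
      _ ≤ 4 * 4 / 27 := by gcongr
      _ = 16 / 27 := by norm_num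
  have sum_le : ∑ j ∈ range n, 3 / 16 * ((2 * (j : ℝ) + 1) * t) ^ 2 ≤ t ^ 2 * n ^ 3 / 4 := by
    calc ∑ j ∈ range n, 3 / 16 * ((2 * (j : ℝ) + 1) * t) ^ 2
        = t ^ 2 * (n * (4 * n ^ 2 - 1)) / 16 := by
          simp_rw [mul_pow, ← mul_sum, ← sum_mul, sum_range_odd_sq]
          ring
      _ ≤ t ^ 2 * n ^ 3 / 4 := by linarith [show 0 ≤ t ^ 2 * (n : ℝ) by positivity]
  calc (1 - t ^ 2 * n ^ 3 / 4) ^ 3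
      ≤ (∏ j ∈ range n, (1 - 3 / 16 * ((2 * (j : ℝ) + 1) * t) ^ 2)) ^ 3 := by
        gcongr
        · linarith
        · exact (sub_le_sub_left sum_le 1).trans <| one_sub_sum_le_prod_one_sub
            (fun j _ ↦ by positivity) (fun j hj ↦ by linarith [arg_sq_le j hj])
    _ = ∏ j ∈ range n, (1 - 3 / 16 * ((2 * (j : ℝ) + 1) * t) ^ 2) ^ 3 := (prod_pow ..).symm
    _ ≤ oddCosProd n t := prod_le_prod
        (fun j hj ↦ pow_nonneg (by linarith [arg_sq_le j hj]) 3)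
        (fun j hj ↦ one_sub_three_div_sixteen_sq_pow_three_le_cos (arg_sq_le j hj))

end OddCosProdBounds

section GeometricDecay

variable {n : ℕ}

lemma pow_nine_mul_pow_le (hn : 83 ≤ n) : (n : ℝ) ^ 9 * (5 / 8) ^ n ≤ 4 := by
  induction n, hn using Nat.le_induction with
  | base => norm_num
  | succ n hn ih =>
    have succ_le : ((n + 1 : ℕ) : ℝ) ≤ 84 / 83 * n := by
      have : (83 : ℝ) ≤ n := by exact_mod_cast hn
      push_cast
      linarith
    calc ((n + 1 : ℕ) : ℝ) ^ 9 * (5 / 8) ^ (n + 1)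
        ≤ (84 / 83 * n) ^ 9 * (5 / 8) ^ (n + 1) := by gcongr
      _ = (84 / 83) ^ 9 * (5 / 8) * ((n : ℝ) ^ 9 * (5 / 8) ^ n) := by ring
      _ ≤ 1 * 4 := by gcongr; norm_num
      _ = 4 := one_mul 4

lemma sqrt_five_eighths_pow_le (hn : 83 ≤ n) :
    √((5 / 8) ^ n) ≤ 2 / (n : ℝ) ^ (9 / 2 : ℝ) := by
  have rpow_sq : ((n : ℝ) ^ (9 / 2 : ℝ)) ^ 2 = n ^ 9 := by
    rw [← rpow_mul_natCast n.cast_nonneg]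
    norm_num
  refine sqrt_le_iff.2 ⟨by positivity, ?_⟩
  rw [div_pow (2 : ℝ), rpow_sq, le_div_iff₀' (by positivity)]
  exact (pow_nine_mul_pow_le hn).trans_eq (by norm_num)

lemma sqrt_pow_le_mul_sqrt_five_eighths_pow (hn : 83 ≤ n) :
    √((27 / 50) ^ n) ≤ 0.0025 * √((5 / 8) ^ n) := by
  refine sqrt_le_iff.2 ⟨by positivity, ?_⟩
  rw [mul_pow, sq_sqrt (by positivity)]
  calc ((27 / 50 : ℝ)) ^ n = (108 / 125) ^ n * (5 / 8) ^ n := by rw [← mul_pow]; norm_num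
    _ ≤ (108 / 125) ^ 83 * (5 / 8) ^ n := by
        gcongr ?_ * _
        exact pow_le_pow_of_le_one (by norm_num) (by norm_num) hn
    _ ≤ 0.0025 ^ 2 * (5 / 8) ^ n := by gcongr; norm_num

end GeometricDecay

section SineIntegral

variable {n : ℕ} {m t : ℝ}

/-- The integrand, with frequency `m`, of the Fourier formula for the differences
`distinctOddPartitions (k + 1) n - distinctOddPartitions k n`. -/
noncomputable def sineIntegrand (n : ℕ) (m t : ℝ) : ℝ := oddCosProd n t * (sin (m * t) * sin t)

/-- The radius of the peak of `oddCosProd n` at `0`, chosen so that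
`1 - t ^ 2 * n ^ 3 / 4 = 1 - t ^ 2 / peakRadius n ^ 2`. -/
noncomputable def peakRadius (n : ℕ) : ℝ := 2 / (n : ℝ) ^ (3 / 2 : ℝ)

lemma intervalIntegrable_sineIntegrand (n : ℕ) (m a b : ℝ) :
    IntervalIntegrable (sineIntegrand n m) MeasureTheory.volume a b := by
  apply Continuous.intervalIntegrable
  unfold sineIntegrand oddCosProd
  fun_prop

lemma sineIntegrand_nonneg (hm : 1 ≤ m) (hmn : m ≤ 2 * n) (ht0 : 0 ≤ t)
    (ht : 2 * n * t ≤ π / 2) : 0 ≤ sineIntegrand n m t := by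
  have hmt : m * t ≤ π / 2 := (mul_le_mul_of_nonneg_right hmn ht0).trans ht
  have htm : t ≤ m * t := le_mul_of_one_le_left ht0 hm
  have := pi_pos
  exact mul_nonneg (oddCosProd_nonneg ht0 ht) <| mul_nonneg
    (sin_nonneg_of_nonneg_of_le_pi (by linarith) (by linarith))
    (sin_nonneg_of_nonneg_of_le_pi ht0 (by linarith))

lemma abs_sineIntegrand_le {C s : ℝ} (hC : |oddCosProd n t| ≤ C) (hs : |sin t| ≤ s) :
    |sineIntegrand n m t| ≤ C * s := by
  have hC0 : 0 ≤ C := (abs_nonneg _).trans hC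
  calc |sineIntegrand n m t| = |oddCosProd n t| * (|sin (m * t)| * |sin t|) := by
        rw [sineIntegrand, abs_mul, abs_mul]
    _ ≤ C * (1 * s) := by gcongr; exact abs_sin_le_one _
    _ = C * s := by rw [one_mul]

lemma peakRadius_nonneg (n : ℕ) : 0 ≤ peakRadius n := by
  unfold peakRadius
  positivity

lemma peakRadius_sq (n : ℕ) : peakRadius n ^ 2 = 4 / (n : ℝ) ^ 3 := by
  rw [peakRadius, div_pow, ← rpow_mul_natCast n.cast_nonneg]
  norm_num

lemma peakRadius_pow_three (n : ℕ) : peakRadius n ^ 3 = 8 / (n : ℝ) ^ (9 / 2 : ℝ) := by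
  rw [peakRadius, div_pow, ← rpow_mul_natCast n.cast_nonneg]
  norm_num

lemma two_mul_mul_peakRadius_le (hn : 7 ≤ n) : 2 * n * peakRadius n ≤ π / 2 := by
  have hn' : (7 : ℝ) ≤ n := by exact_mod_cast hn
  suffices 2 * n * peakRadius n ≤ 1.55 by linarith [pi_gt_d2]
  refine le_of_sq_le_sq ?_ (by norm_num)
  calc (2 * n * peakRadius n) ^ 2 = 16 / n := by
        rw [mul_pow, peakRadius_sq]; field_simp; norm_num
    _ ≤ 16 / 7 := by gcongr
    _ ≤ 1.55 ^ 2 := by norm_num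

lemma sq_mul_one_sub_pow_three_le_sineIntegrand (hn : 27 ≤ n) (hm : 1 ≤ m) (hmn : m ≤ 2 * n)
    (ht0 : 0 ≤ t) (ht : t ≤ peakRadius n) :
    0.98 * (t ^ 2 * (1 - t ^ 2 / peakRadius n ^ 2) ^ 3) ≤ sineIntegrand n m t := by
  have hn' : (27 : ℝ) ≤ n := by exact_mod_cast hn
  have t_sq_le : t ^ 2 ≤ 4 / n ^ 3 := by
    rw [← peakRadius_sq]; gcongr
  have hmt : m * t ≤ π / 2 := by
    calc m * t ≤ 2 * n * peakRadius n := by gcongr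
      _ ≤ π / 2 := two_mul_mul_peakRadius_le (by omega)
  have le_sin : 0.99 * t ≤ sin t := by
    refine mul_le_sin_of_sq_le ht0 (t_sq_le.trans ?_)
    calc 4 / (n : ℝ) ^ 3 ≤ 4 / 27 ^ 3 := by gcongr
      _ ≤ 6 * (1 - 0.99) := by norm_num
  have le_sin_mul : 0.99 * t ≤ sin (m * t) := le_sin.trans (sin_le_sin_mul hm ht0 hmt)
  have cube_le : (1 - t ^ 2 / peakRadius n ^ 2) ^ 3 ≤ oddCosProd n t := by
    convert one_sub_pow_three_le_oddCosProd hn ht0 ((le_div_iff₀ (by positivity)).1 t_sq_le)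
      using 3
    rw [peakRadius_sq, div_div_eq_mul_div]
  have cube_nonneg : 0 ≤ (1 - t ^ 2 / peakRadius n ^ 2) ^ 3 := by
    refine pow_nonneg (sub_nonneg.2 (div_le_one_of_le₀ ?_ (sq_nonneg _))) 3
    gcongr
  calc 0.98 * (t ^ 2 * (1 - t ^ 2 / peakRadius n ^ 2) ^ 3)
      ≤ (1 - t ^ 2 / peakRadius n ^ 2) ^ 3 * (0.99 * t * (0.99 * t)) := by
        linarith [mul_nonneg (sq_nonneg t) cube_nonneg]
    _ ≤ sineIntegrand n m t := by
        unfold sineIntegrand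
        gcongr
        · exact cube_nonneg.trans cube_le
        · exact (by positivity : 0 ≤ 0.99 * t).trans le_sin_mul

lemma le_integral_sineIntegrand_peak (hn : 27 ≤ n) (hm : 1 ≤ m) (hmn : m ≤ 2 * n) :
    0.98 * (16 / 315 * peakRadius n ^ 3) ≤ ∫ t in (0 : ℝ)..π / (4 * n), sineIntegrand n m t := by
  have : (0 : ℝ) < n := by exact_mod_cast (by omega : 0 < n)
  have peakRadius_le : peakRadius n ≤ π / (4 * n) := by
    rw [le_div_iff₀' (by positivity)]
    linarith [two_mul_mul_peakRadius_le (n := n) (by omega)]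
  calc 0.98 * (16 / 315 * peakRadius n ^ 3)
      = ∫ t in (0 : ℝ)..peakRadius n, 0.98 * (t ^ 2 * (1 - t ^ 2 / peakRadius n ^ 2) ^ 3) := by
        rw [intervalIntegral.integral_const_mul, integral_sq_mul_one_sub_div_pow_three]
    _ ≤ ∫ t in (0 : ℝ)..peakRadius n, sineIntegrand n m t :=
        intervalIntegral.integral_mono_on (peakRadius_nonneg n)
          (Continuous.intervalIntegrable (by fun_prop) _ _)
          (intervalIntegrable_sineIntegrand ..)
          fun t ht ↦ sq_mul_one_sub_pow_three_le_sineIntegrand hn hm hmn ht.1 ht.2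
    _ ≤ ∫ t in (0 : ℝ)..π / (4 * n), sineIntegrand n m t := by
        refine intervalIntegral.integral_mono_interval le_rfl (peakRadius_nonneg n) peakRadius_le
          ?_ (intervalIntegrable_sineIntegrand ..)
        filter_upwards [MeasureTheory.ae_restrict_mem measurableSet_Ioc] with t ht
        refine sineIntegrand_nonneg hm hmn ht.1.le ?_
        linarith [(le_div_iff₀' (by positivity)).1 ht.2]

lemma neg_le_integral_sineIntegrand_left (hn : 20 ≤ n) (m : ℝ) :
    -(√((5 / 8) ^ n) / 625) ≤ ∫ t in π / (4 * n)..1 / 25, sineIntegrand n m t := by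
  have hn' : (20 : ℝ) ≤ n := by exact_mod_cast hn
  have left_pos : 0 < π / (4 * n) := by positivity
  have left_le : π / (4 * n) ≤ 1 / 25 := by
    rw [div_le_iff₀ (by positivity)]
    linarith [pi_lt_d2]
  refine le_trans ?_ <| neg_mul_le_integral_of_abs_le (C := √((5 / 8) ^ n) * (1 / 25)) left_le
    fun t ht ↦ ?_
  · linarith [mul_nonneg (sqrt_nonneg ((5 / 8 : ℝ) ^ n)) left_pos.le]
  · have ht0 : 0 < t := left_pos.trans_le ht.1
    refine abs_sineIntegrand_le (abs_oddCosProd_le_of_le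
      ((div_le_iff₀' (by positivity)).1 ht.1) ht0 ht.2) (abs_sin_le_abs.trans ?_)
    rw [abs_of_pos ht0]
    exact ht.2

lemma neg_le_integral_sineIntegrand_middle (hn : 83 ≤ n) (m : ℝ) :
    -(0.004 * √((5 / 8) ^ n)) ≤ ∫ t in 1 / 25..π / 2 - 1 / 25, sineIntegrand n m t := by
  refine le_trans ?_ <| neg_mul_le_integral_of_abs_le (C := √((27 / 50) ^ n) * 1)
    (by linarith [pi_gt_three]) fun t ht ↦
      abs_sineIntegrand_le (abs_oddCosProd_le_of_le_of_le hn ht.1 ht.2) (abs_sin_le_one t)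
  rw [neg_le_neg_iff]
  calc √((27 / 50) ^ n) * 1 * (π / 2 - 1 / 25 - 1 / 25) ≤ √((27 / 50) ^ n) * 1 * 1.6 := by
        gcongr
        linarith [pi_lt_d2]
    _ ≤ 0.004 * √((5 / 8) ^ n) := by linarith [sqrt_pow_le_mul_sqrt_five_eighths_pow hn]

lemma neg_le_integral_sineIntegrand_right (hn : n ≠ 0) (m : ℝ) :
    -(√((5 / 8) ^ n) / 25) ≤ ∫ t in π / 2 - 1 / 25..π / 2, sineIntegrand n m t := by
  refine le_trans ?_ <| neg_mul_le_integral_of_abs_le (C := √((5 / 8) ^ n) * 1) (by linarith)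
    fun t ht ↦ abs_sineIntegrand_le ?_ (abs_sin_le_one t)
  · linarith
  · simpa using abs_oddCosProd_pi_div_two_sub_le (t := π / 2 - t) hn (by linarith [ht.2])
      (by linarith [ht.1])

lemma le_integral_sineIntegrand (hn : 83 ≤ n) (hm : 1 ≤ m) (hmn : m ≤ 2 * n) :
    0.3 / (n : ℝ) ^ (9 / 2 : ℝ) ≤ ∫ t in (0 : ℝ)..π / 2, sineIntegrand n m t := by
  have peak := le_integral_sineIntegrand_peak (by omega) hm hmn
  have left := neg_le_integral_sineIntegrand_left (by omega : 20 ≤ n) m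
  have middle := neg_le_integral_sineIntegrand_middle hn m
  have right := neg_le_integral_sineIntegrand_right (by omega : n ≠ 0) m
  have decay := sqrt_five_eighths_pow_le hn
  have hi := intervalIntegrable_sineIntegrand n m
  rw [← intervalIntegral.integral_add_adjacent_intervals (hi 0 (π / (4 * n))) (hi _ (π / 2)),
    ← intervalIntegral.integral_add_adjacent_intervals (hi _ (1 / 25)) (hi _ (π / 2)),
    ← intervalIntegral.integral_add_adjacent_intervals (hi _ (π / 2 - 1 / 25)) (hi _ (π / 2))]
  rw [peakRadius_pow_three] at peak
  have inv_nonneg : 0 ≤ ((n : ℝ) ^ (9 / 2 : ℝ))⁻¹ := by positivity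
  rw [div_eq_mul_inv _ ((n : ℝ) ^ (9 / 2 : ℝ))] at peak decay ⊢
  linarith

lemma three_mul_sqrt_three_div_le :
    3 * √3 / (√2 * π ^ 2) ≤ 4 / π * 0.3 := by
  have sqrt_div_le : √3 / √2 ≤ 1.225 := by
    rw [← sqrt_div (by norm_num)]
    exact sqrt_le_iff.2 (by norm_num)
  have numerator_le : 3 * (√3 / √2) ≤ 1.2 * π := by linarith [pi_gt_d2]
  calc 3 * √3 / (√2 * π ^ 2) = 3 * (√3 / √2) / π ^ 2 := by field_simp
    _ ≤ 1.2 * π / π ^ 2 := div_le_div_of_nonneg_right numerator_le (sq_nonneg π)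
    _ = 4 / π * 0.3 := by field_simp; norm_num

end SineIntegral

/-- Almkvist's lower bound: for `n ≥ 83` and `(n−1)² ≤ 2k ≤ n²`, one has
`b_k(n) − b_{k−1}(n) ≥ C · 2^n / n^{9/2}` where `C = 3√3/(√2·π²)`. -/
theorem almkvist_middle_lower_bound (n k : ℕ) (hn : 83 ≤ n)
    (hk1 : (n - 1) ^ 2 ≤ 2 * k) (hk2 : 2 * k ≤ n ^ 2) :
    ((distinctOddPartitions k n : ℝ) - (distinctOddPartitions (k - 1) n : ℝ)) ≥
      (3 * Real.sqrt 3 / (Real.sqrt 2 * Real.pi ^ 2)) *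
        (2 : ℝ) ^ (n : ℕ) / (n : ℝ) ^ ((9 : ℝ) / 2) := by
  have k_ne_zero : k ≠ 0 := by
    rintro rfl
    have : 0 < (n - 1) ^ 2 := pow_pos (by omega) 2
    omega
  obtain ⟨k, rfl⟩ := Nat.exists_eq_succ_of_ne_zero k_ne_zero
  have hk1' : ((n : ℝ) - 1) ^ 2 ≤ 2 * (k + 1) := by
    rw [← Nat.cast_pred (by omega)]
    exact_mod_cast hk1
  have hk2' : 2 * ((k : ℝ) + 1) ≤ n ^ 2 := by exact_mod_cast hk2
  calc 3 * √3 / (√2 * π ^ 2) * 2 ^ n / (n : ℝ) ^ ((9 : ℝ) / 2)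
      ≤ 4 / π * 0.3 * 2 ^ n / (n : ℝ) ^ ((9 : ℝ) / 2) := by
        gcongr
        exact three_mul_sqrt_three_div_le
    _ = 4 / π * 2 ^ n * (0.3 / (n : ℝ) ^ ((9 : ℝ) / 2)) := by ring
    _ ≤ 4 / π * 2 ^ n * ∫ t in (0 : ℝ)..π / 2, sineIntegrand n ((n : ℝ) ^ 2 - 2 * k - 1) t := by
        gcongr
        exact le_integral_sineIntegrand hn (by linarith) (by linarith)
    _ = (distinctOddPartitions (k + 1) n : ℝ) - distinctOddPartitions k n :=
        (distinctOddPartitions_succ_sub k n).symm
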